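/- If N is a multiple of 4, a ≠ 0, and ε ≠ 0, then 0 is an eigenvalue of the Harper matrix h(a, 0, ε) of multiplicity exactly 2; that is, 0 is a root of the characteristic polynomial of h(a, 0, ε) of multiplicity exactly 2. -/

import Mathlib

open Matrix Complex

/-- The primitive `N`-th root of unity `ω = exp(2πi/N)`. -/
noncomputable def omegaN (N : ℕ) : ℂ := Complex.exp (2 * (Real.pi : ℂ) * Complex.I / (N : ℂ))

/-- The clock matrix `Z` with `Z_{jk} = ω^j` if `j = k`, `0` otherwise. -/
noncomputable def clockZ (N : ℕ) : Matrix (Fin N) (Fin N) ℂ :=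
  Matrix.diagonal fun j => omegaN N ^ (j : ℕ)

/-- The shift matrix `X` with `X_{jk} = 1` if `j = k + 1 (mod N)`, `0` otherwise. -/
def shiftX (N : ℕ) : Matrix (Fin N) (Fin N) ℂ :=
  Matrix.of fun j k => if (j : ℕ) = ((k : ℕ) + 1) % N then 1 else 0

/-- The shifted Harper matrix
`h(a,b,ε) = (a/2)·e^{ib}·X + (a/2)·e^{−ib}·Xᴴ + (ε/2)·(Z + Zᴴ)`. -/
noncomputable def harper (N : ℕ) (a b ε : ℝ) : Matrix (Fin N) (Fin N) ℂ :=
  ((a : ℂ) / 2 * Complex.exp ((b : ℂ) * Complex.I)) • shiftX N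
  + ((a : ℂ) / 2 * Complex.exp (-(b : ℂ) * Complex.I)) • (shiftX N)ᴴ
  + ((ε : ℂ) / 2) • (clockZ N + (clockZ N)ᴴ)

/-- The parity matrix `P` with `P_{jk} = 1` if `j + k ≡ 0 (mod N)`, `0` otherwise. -/
def parityP (N : ℕ) : Matrix (Fin N) (Fin N) ℂ :=
  Matrix.of fun j k => if ((j : ℕ) + (k : ℕ)) % N = 0 then 1 else 0

/-- The discrete Fourier transform matrix `Q` with `Q_{jk} = ω^{jk}/√N`. -/
noncomputable def dftQ (N : ℕ) : Matrix (Fin N) (Fin N) ℂ :=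
  Matrix.of fun j k => omegaN N ^ ((j : ℕ) * (k : ℕ)) / (Real.sqrt N : ℂ)

/-!
Since `h(a, 0, ε)` is Hermitian, the multiplicity of the root `0` is the dimension of the kernel.
A kernel vector is the same as an `N`-periodic solution of the recurrence
`v (n + 2) + q (n + 1) v (n + 1) + v n = 0` with `q n = (2ε/a) cos (2πn/N)`, whose solutions form a
two-dimensional space. If `N = 4m`, then `q` is odd about every odd multiple of `m`. This makes
every solution symmetric or antisymmetric about these points, and composing the
reflections about two consecutive ones shows that every solution is `N`-periodic.
-/

section Hermitian

variable {𝕜 n : Type*} [RCLike 𝕜] [Fintype n] [DecidableEq n]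

lemma finrank_eigenspace_toEuclideanLin (A : Matrix n n 𝕜) (μ : 𝕜) :
    Module.finrank 𝕜 (Module.End.eigenspace (toEuclideanLin A) μ) =
      Module.finrank 𝕜 (Module.End.eigenspace A.mulVecLin μ) := by
  have hcomap : Module.End.eigenspace (toEuclideanLin A) μ =
      (Module.End.eigenspace A.mulVecLin μ).comap
        (WithLp.linearEquiv 2 𝕜 (n → 𝕜)).toLinearMap := by
    ext x
    simp [← (WithLp.ofLp_injective 2).eq_iff]
  rw [hcomap]
  exact (LinearEquiv.ofSubmodule' _ _).finrank_eq

lemma rootMultiplicity_charpoly_of_isHermitian {A : Matrix n n 𝕜} (hA : A.IsHermitian) (μ : 𝕜) :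
    A.charpoly.rootMultiplicity μ = Module.finrank 𝕜 (Module.End.eigenspace A.mulVecLin μ) := by
  have hsemisimple := (isSymmetric_toEuclideanLin_iff.mpr hA).isFinitelySemisimple
  have hcharpoly : LinearMap.charpoly (toEuclideanLin A) = A.charpoly := by
    rw [toEuclideanLin, toLpLin_eq_toLin, charpoly_toLin]
  rw [← hcharpoly, ← LinearMap.finrank_maxGenEigenspace_eq,
    hsemisimple.maxGenEigenspace_eq_eigenspace, finrank_eigenspace_toEuclideanLin]

end Hermitian

section Recurrence

variable {R : Type*} [CommRing R]

/-- The solutions on `ℕ` of the discrete Schrödinger equation with potential `q` (at energy `0`).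
Only the values of `q` at positive indices enter. -/
def schrodingerSolutions (q : ℕ → R) : Submodule R (ℕ → R) where
  carrier := {v | ∀ n, v (n + 2) + q (n + 1) * v (n + 1) + v n = 0}
  zero_mem' := by simp
  add_mem' hv hw n := by
    simp only [Pi.add_apply]
    linear_combination hv n + hw n
  smul_mem' c v hv n := by
    simp only [Pi.smul_apply, smul_eq_mul]
    linear_combination c * hv n

/-- The solution of the discrete Schrödinger equation with potential `q` and initial values
`s`, `t`. -/
def schrodingerSolution (q : ℕ → R) (s t : R) : ℕ → R
  | 0 => s
  | 1 => t
  | n + 2 => -(q (n + 1) * schrodingerSolution q s t (n + 1)) - schrodingerSolution q s t n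

lemma schrodingerSolution_mem (q : ℕ → R) (s t : R) :
    schrodingerSolution q s t ∈ schrodingerSolutions q := fun n => by
  rw [schrodingerSolution]
  ring

variable {q v : ℕ → R}

lemma schrodingerSolution_eq_of_mem (hv : v ∈ schrodingerSolutions q) :
    schrodingerSolution q (v 0) (v 1) = v := by
  funext n
  induction n using Nat.twoStepInduction with
  | zero => rfl
  | one => rfl
  | more n ih₀ ih₁ =>
    rw [schrodingerSolution, ih₀, ih₁]
    linear_combination -hv n

/-- The parametrization of the solutions by their values at `0` and `1`. -/
def schrodingerSolutionsEquiv (q : ℕ → R) : schrodingerSolutions q ≃ₗ[R] R × R where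
  toFun v := (v.1 0, v.1 1)
  map_add' _ _ := rfl
  map_smul' _ _ := rfl
  invFun s := ⟨schrodingerSolution q s.1 s.2, schrodingerSolution_mem q s.1 s.2⟩
  left_inv v := Subtype.ext (schrodingerSolution_eq_of_mem v.2)
  right_inv _ := rfl

lemma finrank_schrodingerSolutions [StrongRankCondition R] (q : ℕ → R) :
    Module.finrank R (schrodingerSolutions q) = 2 := by
  simp [(schrodingerSolutionsEquiv q).finrank_eq]

/-- The sequence `q` takes opposite values at points symmetric about `p`; on `ℕ` this only
concerns the indices up to `2 * p`. -/
def IsOddAbout (q : ℕ → R) (p : ℕ) : Prop :=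
  ∀ ⦃i j⦄, i + j = 2 * p → q i = -q j

/-- The potential `n ↦ c (wⁿ + uⁿ)`. It is meant for `u = w⁻¹`, when `w = exp (iθ)` makes it
`2c cos (nθ)`. -/
def cosinePotential (c w u : R) (n : ℕ) : R := c * (w ^ n + u ^ n)

lemma isOddAbout_cosinePotential (c : R) {w u : R} (hwu : w * u = 1) {p : ℕ}
    (hw : w ^ (2 * p) = -1) : IsOddAbout (cosinePotential c w u) p := by
  intro i j hij
  have hi : w ^ i * u ^ i = 1 := by rw [← mul_pow, hwu, one_pow]
  have hj : w ^ j * u ^ j = 1 := by rw [← mul_pow, hwu, one_pow]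
  have hw_ij : w ^ i * w ^ j = -1 := by rw [← pow_add, hij, hw]
  unfold cosinePotential
  linear_combination c * ((u ^ j + u ^ i) * hw_ij - w ^ j * hi - w ^ i * hj)

lemma periodic_cosinePotential (c : R) {w u : R} {N : ℕ} (hw : w ^ N = 1) (hu : u ^ N = 1) :
    Function.Periodic (cosinePotential c w u) N := fun n => by
  simp only [cosinePotential, pow_add, hw, hu, mul_one]

variable [IsAddTorsionFree R] {p d : ℕ}

lemma IsOddAbout.apply_self (hq : IsOddAbout q p) : q p = 0 :=
  self_eq_neg.mp (hq (two_mul p).symm)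

lemma apply_add_eq_of_isOddAbout (hv : v ∈ schrodingerSolutions q) (hq : IsOddAbout q p)
    {r k : ℕ} (h : r + k = p) : v (p + k) = (-1) ^ k * v r := by
  induction k using Nat.twoStepInduction generalizing r with
  | zero => simp_all
  | one =>
    subst h
    have hr := hv r
    rw [hq.apply_self] at hr
    linear_combination hr
  | more k ih₀ ih₁ =>
    have hq_reflect : q (p + k + 1) = -q (r + 1) := hq (by omega)
    have h₀ : v (p + k) = (-1) ^ k * v (r + 2) := ih₀ (by omega)
    have h₁ : v (p + k + 1) = (-1) ^ (k + 1) * v (r + 1) := ih₁ (by omega)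
    have hp := hv (p + k)
    rw [h₀, h₁, hq_reflect] at hp
    linear_combination hp - (-1) ^ k * hv r

lemma apply_eq_of_isOddAbout (hv : v ∈ schrodingerSolutions q) (hq : IsOddAbout q p) {i j : ℕ}
    (hij : i + j = 2 * p) : v i = (-1) ^ (p + j) * v j := by
  wlog hji : j ≤ i generalizing i j
  · have hsign : Even (p + j + (p + i)) := ⟨2 * p, by omega⟩
    rw [this (i := j) (j := i) (by omega) (by omega), ← mul_assoc, ← pow_add,
      hsign.neg_one_pow, one_mul]
  obtain ⟨k, rfl⟩ := Nat.exists_eq_add_of_le (show j ≤ p by omega)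
  have hsign : (-1 : R) ^ (j + k + j) = (-1) ^ k := by
    rw [show j + k + j = 2 * j + k by ring, pow_add, (even_two_mul j).neg_one_pow, one_mul]
  rw [show i = j + k + k by omega, apply_add_eq_of_isOddAbout hv hq rfl, hsign]

lemma apply_add_two_mul_of_isOddAbout (hv : v ∈ schrodingerSolutions q) (hp : IsOddAbout q p)
    (hpd : IsOddAbout q (p + d)) {n : ℕ} (hn : n ≤ 2 * p) :
    v (n + 2 * d) = (-1) ^ d * v n := by
  obtain ⟨j, hj⟩ := Nat.exists_eq_add_of_le' hn
  calc v (n + 2 * d) = (-1) ^ (p + d + j) * v j := apply_eq_of_isOddAbout hv hpd (by omega)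
    _ = (-1) ^ (p + d + j) * ((-1) ^ (p + n) * v n) := by
      rw [apply_eq_of_isOddAbout hv hp hj.symm]
    _ = (-1) ^ (2 * (2 * p) + d) * v n := by
      rw [← mul_assoc, ← pow_add, show p + d + j + (p + n) = 2 * (2 * p) + d by omega]
    _ = (-1) ^ d * v n := by rw [pow_add, (even_two_mul _).neg_one_pow, one_mul]

lemma periodic_of_mem_schrodingerSolutions {c w u : R} (hwu : w * u = 1) {m : ℕ}
    (hw : w ^ (2 * m) = -1) (hv : v ∈ schrodingerSolutions (cosinePotential c w u)) :
    Function.Periodic v (4 * m) := by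
  intro n
  obtain rfl | hm := m.eq_zero_or_pos
  · simp
  have hodd {l : ℕ} (hl : Odd l) : IsOddAbout (cosinePotential c w u) (l * m) :=
    isOddAbout_cosinePotential c hwu <| by
      rw [show 2 * (l * m) = 2 * m * l by ring, pow_mul, hw, hl.neg_one_pow]
  have hp : IsOddAbout (cosinePotential c w u) ((2 * n + 1) * m) := hodd ⟨n, rfl⟩
  have hpd : IsOddAbout (cosinePotential c w u) ((2 * n + 1) * m + 2 * m) := by
    rw [← add_mul]
    exact hodd ⟨n + 1, by ring⟩
  calc v (n + 4 * m) = v (n + 2 * (2 * m)) := by ring_nf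
    _ = (-1) ^ (2 * m) * v n := apply_add_two_mul_of_isOddAbout hv hp hpd (by nlinarith)
    _ = v n := by rw [(even_two_mul m).neg_one_pow, one_mul]

end Recurrence

section PeriodicExtension

variable (R : Type*) [Semiring R] (N : ℕ) [NeZero N]

/-- The extension of a vector indexed by `Fin N` to an `N`-periodic sequence. -/
def periodicExtension : (Fin N → R) →ₗ[R] ℕ → R := LinearMap.funLeft R R (Fin.ofNat N)

lemma periodicExtension_injective : Function.Injective (periodicExtension R N) :=
  LinearMap.funLeft_injective_of_surjective _ _ _ fun j => ⟨j, Fin.ofNat_val_eq_self j⟩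

variable {R N}

lemma mem_range_periodicExtension {v : ℕ → R} (hv : Function.Periodic v N) :
    v ∈ (periodicExtension R N).range :=
  ⟨fun j => v j, funext fun n => hv.map_mod_nat n⟩

end PeriodicExtension

section Harper

variable (N : ℕ)

lemma isHermitian_harper (a b ε : ℝ) : (harper N a b ε).IsHermitian := by
  simp only [IsHermitian, harper, neg_mul, smul_add, conjTranspose_add, conjTranspose_smul,
    star_mul', star_div₀, RCLike.star_def, conj_ofReal, star_ofNat, ← Complex.exp_conj, map_mul,
    conj_I, mul_neg, map_neg, neg_neg, conjTranspose_conjTranspose]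
  abel

variable [NeZero N]

lemma isPrimitiveRoot_omegaN : IsPrimitiveRoot (omegaN N) N :=
  Complex.isPrimitiveRoot_exp N (NeZero.ne N)

lemma omegaN_mul_star : omegaN N * star (omegaN N) = 1 := by
  have hnorm : ‖omegaN N‖ = 1 := (isPrimitiveRoot_omegaN N).norm'_eq_one (NeZero.ne N)
  rw [star_def, Complex.mul_conj', hnorm]
  simp

variable {N}

lemma shiftX_apply (j k : Fin N) : shiftX N j k = if j = k + 1 then 1 else 0 := by
  simp [shiftX, Fin.ext_iff, Fin.val_add]

lemma shiftX_mulVec (x : Fin N → ℂ) (j : Fin N) : (shiftX N *ᵥ x) j = x (j - 1) := by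
  simp [mulVec, dotProduct, shiftX_apply, ← sub_eq_iff_eq_add]

lemma conjTranspose_shiftX_mulVec (x : Fin N → ℂ) (j : Fin N) :
    ((shiftX N)ᴴ *ᵥ x) j = x (j + 1) := by
  simp [mulVec, dotProduct, shiftX_apply]

/-- The potential of the recurrence satisfied by the kernel vectors of `h(a, 0, ε)`; its value at
`n` is `(2ε/a) cos (2πn/N)`. -/
noncomputable def harperPotential (N : ℕ) (a ε : ℝ) : ℕ → ℂ :=
  cosinePotential (ε / a) (omegaN N) (star (omegaN N))

lemma periodic_harperPotential (a ε : ℝ) : Function.Periodic (harperPotential N a ε) N := by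
  have hω : omegaN N ^ N = 1 := (isPrimitiveRoot_omegaN N).pow_eq_one
  exact periodic_cosinePotential _ hω (by rw [← star_pow, hω, star_one])

lemma harper_mulVec {a : ℝ} (ha : a ≠ 0) (ε : ℝ) (x : Fin N → ℂ) (j : Fin N) :
    (harper N a 0 ε *ᵥ x) j =
      a / 2 * (x (j + 1) + harperPotential N a ε j * x j + x (j - 1)) := by
  have ha' : (a : ℂ) ≠ 0 := mod_cast ha
  simp only [harper, harperPotential, cosinePotential, clockZ, ofReal_zero, neg_zero, zero_mul,
    exp_zero, mul_one, diagonal_conjTranspose, diagonal_add, Pi.star_apply, star_pow, add_mulVec,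
    smul_mulVec, Pi.add_apply, Pi.smul_apply, smul_eq_mul, shiftX_mulVec,
    conjTranspose_shiftX_mulVec, mulVec_diagonal]
  field_simp
  ring

lemma ker_harper {a : ℝ} (ha : a ≠ 0) (ε : ℝ) :
    (harper N a 0 ε).mulVecLin.ker =
      (schrodingerSolutions (harperPotential N a ε)).comap (periodicExtension ℂ N) := by
  have hsucc (n : ℕ) : Fin.ofNat N (n + 1) = Fin.ofNat N n + 1 := by
    simp [Fin.ext_iff, Fin.val_add]
  have hsurj : Function.Surjective fun n => Fin.ofNat N (n + 1) := fun j =>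
    ⟨(j - 1 : Fin N), by
    beta_reduce
    rw [hsucc, Fin.ofNat_val_eq_self, sub_add_cancel]⟩
  have hpred (n : ℕ) : Fin.ofNat N (n + 1) - 1 = Fin.ofNat N n := by
    rw [hsucc, add_sub_cancel_right]
  have hpotential (n : ℕ) :
      harperPotential N a ε (Fin.ofNat N n) = harperPotential N a ε n :=
    (periodic_harperPotential a ε).map_mod_nat n
  have ha' : (a : ℂ) / 2 ≠ 0 := by simpa using ha
  ext x
  rw [LinearMap.mem_ker, funext_iff, hsurj.forall]
  refine forall_congr' fun n => ?_
  rw [mulVecLin_apply, harper_mulVec ha, Pi.zero_apply, mul_eq_zero, or_iff_right ha',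
    hpotential, ← hsucc, hpred]
  rfl

end Harper

/-- If `N` is a multiple of `4`, `a ≠ 0`, and `ε ≠ 0`, then `0` is a root of the
characteristic polynomial of `h(a, 0, ε)` of multiplicity exactly `2`. -/
theorem harper_zero_eigenvalue_multiplicity_two (N : ℕ) (hN : 2 ≤ N) (hN4 : 4 ∣ N)
    (a ε : ℝ) (ha : a ≠ 0) (hε : ε ≠ 0) :
    Polynomial.rootMultiplicity 0 (Matrix.charpoly (harper N a 0 ε)) = 2 := by
  obtain ⟨m, rfl⟩ := hN4
  have : NeZero (4 * m) := ⟨by omega⟩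
  have hω : omegaN (4 * m) ^ (2 * m) = -1 :=
    ((isPrimitiveRoot_omegaN (4 * m)).pow (by omega) (by ring)).eq_neg_one_of_two_right
  have hperiodic : schrodingerSolutions (harperPotential (4 * m) a ε) ≤
      (periodicExtension ℂ (4 * m)).range := fun _ hv =>
    mem_range_periodicExtension <|
      periodic_of_mem_schrodingerSolutions (omegaN_mul_star (4 * m)) hω hv
  rw [rootMultiplicity_charpoly_of_isHermitian (isHermitian_harper (4 * m) a 0 ε),
    Module.End.eigenspace_zero, ker_harper ha,
    (Submodule.comap_equiv_self_of_inj_of_le (periodicExtension_injective ℂ (4 * m))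
      hperiodic).finrank_eq,
    finrank_schrodingerSolutions]
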